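/- Let α > 1, and let a, b, c be real numbers with a > 0 and ab − c² > 0. For s, t ≥ 0, write I(s,t) = ∫_D x^{s} y^{t} (xy − z²)^{(α−3)/2} exp(−(a x + b y + 2 c z)) d(x,y,z), where D = {(x,y,z) ∈ ℝ³ : x > 0, y > 0, xy − z² > 0}, and let ρ² = c²/(ab) ∈ [0,1). Then for every ν₁, ν₂ ≥ 0: I(ν₁,ν₂) · I(0,0) ≥ I(ν₁,0) · I(0,ν₂) · [1 + (1 − ρ²)^{α/2 + ν₁ + ν₂} · (∑_{k=0}^∞ ((ν₁ν₂)^k ρ^{2k} / ((α/2)_k · k!)) − 1)] ≥ I(ν₁,0) · I(0,ν₂). (This is the quantitative Gaussian-product-type inequality E(X₁₁^{ν₁} X₂₂^{ν₂}) ≥ E(X₁₁^{ν₁}) E(X₂₂^{ν₂}) [1 + (1−ρ²)^{α/2+ν₁+ν₂}(₀F₁(α/2; ν₁ν₂ρ²) − 1)] ≥ E(X₁₁^{ν₁}) E(X₂₂^{ν₂}) for the bivariate Wishart distribution.) -/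

import Mathlib

/-!
Only the part of `exp(-2cz)` even in `z` contributes to `I(s,t)`. Expanding it as a power series
in `c`, a Beta integral in `z` and Gamma integrals in `x` and `y` evaluate each term, and with
`β = α/2`, `ρ² = c²/(ab)` the sum is
`I(s,t) = const · a^{-(β+s)} b^{-(β+t)} Γ(β+s) Γ(β+t) ₂F₁(β+s, β+t; β; ρ²)`.
When `s` or `t` vanishes, `₂F₁` collapses to the binomial series of a power of `1 - ρ²`, so that
`I(s,t) I(0,0) = I(s,0) I(0,t) (1-ρ²)^{β+s+t} ₂F₁(β+s, β+t; β; ρ²)`.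
Since also `(1-ρ²)^{-(β+s+t)} = ₂F₁(β+s+t, β; β; ρ²)`, the inequality is one between power series
in `ρ²`. It holds coefficientwise, because `(β)ₖ (β+s+t)ₖ + (st)ᵏ ≤ (β+s)ₖ (β+t)ₖ` for `k ≥ 1`;
the case `k = 1` of this is an equality.
-/

open MeasureTheory Polynomial Real

/-- `I(s,t) = ∫_D x^s y^t (xy − z²)^{(α−3)/2} exp(−(ax + by + 2cz)) d(x,y,z)`,
the mixed moment integral of the bivariate Wishart distribution over
`D = {(x,y,z) : x > 0, y > 0, xy − z² > 0}`. -/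
noncomputable def wishartMomentIntegral (α a b c s t : ℝ) : ℝ :=
  ∫ p in {q : ℝ × ℝ × ℝ | 0 < q.1 ∧ 0 < q.2.1 ∧ 0 < q.1 * q.2.1 - q.2.2 ^ 2},
    p.1 ^ s * p.2.1 ^ t * (p.1 * p.2.1 - p.2.2 ^ 2) ^ ((α - 3) / 2) *
      Real.exp (-(a * p.1 + b * p.2.1 + 2 * c * p.2.2))

section Hypergeometric

/-- The confluent hypergeometric limit function `₀F₁(; b; z) = ∑ₖ zᵏ / ((b)ₖ k!)`, the entire
function measuring the gain in the moment inequality. It is meant for `b` not a nonpositive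
integer: otherwise all but finitely many terms are divisions by zero. -/
noncomputable def confluentHypergeometricLimit (b z : ℝ) : ℝ :=
  ∑' k : ℕ, z ^ k / ((ascPochhammer ℝ k).eval b * (k.factorial : ℝ))

lemma min_one_le_ascPochhammer_eval {b : ℝ} (hb : 0 < b) (k : ℕ) :
    min b 1 ≤ (ascPochhammer ℝ k).eval b := by
  induction k with
  | zero => simp
  | succ k ih =>
    rcases k.eq_zero_or_pos with rfl | hk
    · simp
    · have hk' : (1 : ℝ) ≤ k := by exact_mod_cast hk
      rw [ascPochhammer_succ_eval]
      exact ih.trans (le_mul_of_one_le_right (ascPochhammer_pos k b hb).le (by linarith))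

lemma hasSum_confluentHypergeometricLimit {b : ℝ} (hb : 0 < b) (z : ℝ) :
    HasSum (fun k : ℕ => z ^ k / ((ascPochhammer ℝ k).eval b * (k.factorial : ℝ)))
      (confluentHypergeometricLimit b z) := by
  refine Summable.hasSum <| .of_norm_bounded
    ((Real.summable_pow_div_factorial |z|).mul_left (min b 1)⁻¹) fun k => ?_
  have hpoch := ascPochhammer_pos k b hb
  calc ‖z ^ k / ((ascPochhammer ℝ k).eval b * (k.factorial : ℝ))‖
      = ((ascPochhammer ℝ k).eval b)⁻¹ * (|z| ^ k / k.factorial) := by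
        rw [Real.norm_eq_abs, abs_div, abs_pow, abs_of_pos (by positivity : (0 : ℝ) < _ * _)]
        field_simp
    _ ≤ (min b 1)⁻¹ * (|z| ^ k / k.factorial) := by
        gcongr
        exact min_one_le_ascPochhammer_eval hb k

lemma one_le_confluentHypergeometricLimit {b z : ℝ} (hb : 0 < b) (hz : 0 ≤ z) :
    1 ≤ confluentHypergeometricLimit b z := by
  simpa using le_hasSum (hasSum_confluentHypergeometricLimit hb z) 0 fun k _ =>
    div_nonneg (pow_nonneg hz k)
      (mul_nonneg (ascPochhammer_pos k b hb).le k.factorial.cast_nonneg)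

lemma one_le_radius_ordinaryHypergeometricSeries {𝕂 : Type*} (𝔸 : Type*) [RCLike 𝕂]
    [NormedDivisionRing 𝔸] [NormedAlgebra 𝕂 𝔸] (a b c : 𝕂) :
    1 ≤ (ordinaryHypergeometricSeries 𝔸 a b c).radius := by
  by_cases habc : ∀ k : ℕ, (k : 𝕂) ≠ -a ∧ (k : 𝕂) ≠ -b ∧ (k : 𝕂) ≠ -c
  · exact (ordinaryHypergeometricSeries_radius_eq_one 𝔸 a b c habc).ge
  · suffices (ordinaryHypergeometricSeries 𝔸 a b c).radius = ⊤ from this ▸ le_top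
    simp only [not_forall, not_and_or, not_not, ← neg_eq_iff_eq_neg] at habc
    obtain ⟨k, rfl | rfl | rfl⟩ := habc
    · exact ordinaryHypergeometric_radius_top_of_neg_nat₁ 𝔸 b c
    · exact ordinaryHypergeometric_radius_top_of_neg_nat₂ 𝔸 a c
    · exact ordinaryHypergeometric_radius_top_of_neg_nat₃ 𝔸 a b

lemma hasSum_ordinaryHypergeometric {𝕂 : Type*} [RCLike 𝕂] (a b c : 𝕂) {x : 𝕂} (hx : ‖x‖ < 1) :
    HasSum (fun k : ℕ => ordinaryHypergeometricCoefficient a b c k * x ^ k) (₂F₁ a b c x) := by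
  have hball : x ∈ Metric.eball 0 (ordinaryHypergeometricSeries 𝕂 a b c).radius := by
    refine Metric.eball_subset_eball (one_le_radius_ordinaryHypergeometricSeries 𝕂 a b c) ?_
    rwa [← ENNReal.ofReal_one, Metric.eball_ofReal, mem_ball_zero_iff]
  have hsum := (ordinaryHypergeometricSeries 𝕂 a b c).hasSum hball
  simp only [ordinaryHypergeometricSeries_apply_eq, smul_eq_mul] at hsum
  exact hsum

lemma ordinaryHypergeometric_symm {𝕂 : Type*} [Field 𝕂] [TopologicalSpace 𝕂]
    [IsTopologicalRing 𝕂] (a b c x : 𝕂) : ₂F₁ a b c x = ₂F₁ b a c x := by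
  rw [ordinaryHypergeometric, ordinaryHypergeometric, ordinaryHypergeometricSeries_symm]

lemma ordinaryHypergeometric_right_cancel (a : ℝ) {b x : ℝ} (hb : ∀ k : ℕ, (k : ℝ) ≠ -b)
    (hx : |x| < 1) : ₂F₁ a b b x = (1 - x) ^ (-a) := by
  have hball : -x ∈ Metric.eball (0 : ℝ) 1 := by
    rwa [← ENNReal.ofReal_one, Metric.eball_ofReal, mem_ball_zero_iff, norm_neg]
  have hsum := (Real.one_add_rpow_hasFPowerSeriesOnBall_zero (a := -a)).hasSum hball
  rw [binomialSeries_eq_ordinaryHypergeometricSeries hb, zero_add, ← sub_eq_add_neg] at hsum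
  refine (hasSum_ordinaryHypergeometric a b b hx).unique ?_
  simpa only [FormalMultilinearSeries.compContinuousLinearMap_apply, Function.comp_def,
    neg_apply, ContinuousLinearMap.id_apply, neg_neg,
    ordinaryHypergeometricSeries_apply_eq, smul_eq_mul] using hsum

lemma ascPochhammer_eval_mul_add_mul_pow_le {b m n : ℝ} (hb : 0 < b) (hmn : 0 ≤ m * n)
    (hbmn : 0 < b + m + n) (k : ℕ) :
    (ascPochhammer ℝ (k + 1)).eval b * (ascPochhammer ℝ (k + 1)).eval (b + m + n)
        + (m * n) ^ (k + 1)
      ≤ (ascPochhammer ℝ (k + 1)).eval (b + m) * (ascPochhammer ℝ (k + 1)).eval (b + n) := by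
  induction k with
  | zero =>
    simp only [zero_add, ascPochhammer_one, eval_X, pow_one]
    linarith
  | succ k ih =>
    simp only [ascPochhammer_succ_eval (k + 1), pow_succ _ (k + 1)]
    have hA : 0 ≤ (ascPochhammer ℝ (k + 1)).eval b * (ascPochhammer ℝ (k + 1)).eval (b + m + n) :=
      (mul_pos (ascPochhammer_pos _ _ hb) (ascPochhammer_pos _ _ hbmn)).le
    set A := (ascPochhammer ℝ (k + 1)).eval b * (ascPochhammer ℝ (k + 1)).eval (b + m + n)
    set B := (ascPochhammer ℝ (k + 1)).eval (b + m) * (ascPochhammer ℝ (k + 1)).eval (b + n)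
    set P := (m * n) ^ (k + 1)
    set j : ℝ := ((k + 1 : ℕ) : ℝ)
    have hP : 0 ≤ P := pow_nonneg hmn _
    have hE : 0 ≤ (b + j) * (b + m + n + j) := by positivity
    calc _ = A * ((b + j) * (b + m + n + j)) + P * (m * n) := by ring
      _ ≤ (A + P) * ((b + j) * (b + m + n + j) + m * n) := by
        nlinarith only [mul_nonneg hA hmn, mul_nonneg hP hE]
      _ ≤ B * ((b + j) * (b + m + n + j) + m * n) := by gcongr
      _ = _ := by ring

lemma add_confluentHypergeometricLimit_sub_one_le_ordinaryHypergeometric {b m n x : ℝ}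
    (hb : 0 < b) (hmn : 0 ≤ m * n) (hbmn : 0 < b + m + n) (hx₀ : 0 ≤ x) (hx₁ : x < 1) :
    (1 - x) ^ (-(b + m + n)) + (confluentHypergeometricLimit b (m * n * x) - 1)
      ≤ ₂F₁ (b + m) (b + n) b x := by
  have hx : |x| < 1 := by rwa [abs_of_nonneg hx₀]
  have hb' : ∀ k : ℕ, (k : ℝ) ≠ -b := fun k => by linarith [k.cast_nonneg (α := ℝ)]
  rw [← ordinaryHypergeometric_right_cancel (b + m + n) hb' hx]
  refine hasSum_le (fun k => ?_) ((hasSum_ordinaryHypergeometric (b + m + n) b b hx).add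
    ((hasSum_confluentHypergeometricLimit hb (m * n * x)).sub (hasSum_ite_eq 0 (1 : ℝ))))
    (hasSum_ordinaryHypergeometric (b + m) (b + n) b hx)
  rcases k with _ | k
  · simp [ordinaryHypergeometricCoefficient]
  · have hpoch := ascPochhammer_pos (k + 1) b hb
    simp only [ordinaryHypergeometricCoefficient, Nat.succ_ne_zero, if_false, sub_zero]
    calc _ = ((ascPochhammer ℝ (k + 1)).eval b * (ascPochhammer ℝ (k + 1)).eval (b + m + n)
            + (m * n) ^ (k + 1))
          * (x ^ (k + 1) / ((k + 1).factorial * (ascPochhammer ℝ (k + 1)).eval b)) := by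
          rw [mul_pow (m * n)]
          field_simp
      _ ≤ (ascPochhammer ℝ (k + 1)).eval (b + m) * (ascPochhammer ℝ (k + 1)).eval (b + n)
          * (x ^ (k + 1) / ((k + 1).factorial * (ascPochhammer ℝ (k + 1)).eval b)) := by
          gcongr
          exact ascPochhammer_eval_mul_add_mul_pow_le hb hmn hbmn k
      _ = _ := by field_simp

lemma one_add_mul_confluentHypergeometricLimit_le {b m n x : ℝ} (hb : 0 < b)
    (hmn : 0 ≤ m * n) (hbmn : 0 < b + m + n) (hx₀ : 0 ≤ x) (hx₁ : x < 1) :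
    1 + (1 - x) ^ (b + m + n) * (confluentHypergeometricLimit b (m * n * x) - 1)
      ≤ (1 - x) ^ (b + m + n) * ₂F₁ (b + m) (b + n) b x := by
  have hx : 0 < 1 - x := sub_pos.2 hx₁
  calc _ = (1 - x) ^ (b + m + n) * ((1 - x) ^ (-(b + m + n))
          + (confluentHypergeometricLimit b (m * n * x) - 1)) := by
        rw [mul_add, ← Real.rpow_add hx, add_neg_cancel, Real.rpow_zero]
    _ ≤ _ := by
        gcongr
        exact add_confluentHypergeometricLimit_sub_one_le_ordinaryHypergeometric hb hmn hbmn hx₀ hx₁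

end Hypergeometric

section GammaBeta

lemma Gamma_add_natCast {x : ℝ} (hx : 0 < x) (k : ℕ) :
    Real.Gamma (x + k) = (ascPochhammer ℝ k).eval x * Real.Gamma x := by
  induction k with
  | zero => simp
  | succ k ih =>
    rw [Nat.cast_succ, ← add_assoc, Real.Gamma_add_one (by positivity), ih,
      ascPochhammer_succ_eval]
    ring

lemma Gamma_natCast_add_half (k : ℕ) :
    Real.Gamma (k + 1 / 2) = (2 * k).factorial * √π / (4 ^ k * k.factorial) := by
  have hdup := Real.Gamma_mul_Gamma_add_half (k + 1 / 2)
  rw [show (k + 1 / 2 + 1 / 2 : ℝ) = k + 1 by ring, Real.Gamma_nat_eq_factorial,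
    show 2 * (k + 1 / 2 : ℝ) = (2 * k : ℕ) + 1 by push_cast; ring, Real.Gamma_nat_eq_factorial,
    show (1 - ((2 * k : ℕ) + 1) : ℝ) = -((2 * k : ℕ) : ℝ) by ring, Real.rpow_neg zero_le_two,
    Real.rpow_natCast, pow_mul] at hdup
  rw [eq_div_iff (by positivity), mul_left_comm, hdup]
  norm_num
  field_simp

lemma two_mul_pow_div_factorial_mul_beta {q : ℝ} (hq : 0 < q) (c : ℝ) (k : ℕ) :
    (2 * c) ^ (2 * k) / ((2 * k).factorial : ℝ) * ProbabilityTheory.beta (k + 1 / 2) q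
      = √π * Real.Gamma q / Real.Gamma (q + 1 / 2)
        * (c ^ (2 * k) / (k.factorial * (ascPochhammer ℝ k).eval (q + 1 / 2))) := by
  rw [ProbabilityTheory.beta, show (k + 1 / 2 + q : ℝ) = q + 1 / 2 + k by ring,
    Gamma_add_natCast (by positivity), Gamma_natCast_add_half, mul_pow, pow_mul 2]
  norm_num only
  field_simp

lemma lintegral_rpow_mul_exp_neg_mul_Ioi {p a : ℝ} (hp : 0 < p) (ha : 0 < a) :
    ∫⁻ x in Set.Ioi (0 : ℝ), ENNReal.ofReal (x ^ (p - 1) * Real.exp (-(a * x)))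
      = ENNReal.ofReal ((1 / a) ^ p * Real.Gamma p) := by
  have hval := Real.integral_rpow_mul_exp_neg_mul_Ioi hp ha
  rw [← hval, ofReal_integral_eq_lintegral_ofReal]
  · exact not_imp_comm.1 integral_undef (hval ▸ by positivity)
  · filter_upwards [ae_restrict_mem measurableSet_Ioi] with x (hx : 0 < x)
    simp only [Pi.zero_apply]
    positivity

lemma lintegral_rpow_mul_one_sub_rpow_Ioo {p q : ℝ} (hp : 0 < p) (hq : 0 < q) :
    ∫⁻ u in Set.Ioo (0 : ℝ) 1, ENNReal.ofReal (u ^ (p - 1) * (1 - u) ^ (q - 1))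
      = ENNReal.ofReal (ProbabilityTheory.beta p q) := by
  have hβ := ProbabilityTheory.beta_pos hp hq
  have hpdf := ProbabilityTheory.lintegral_betaPDF_eq_one hp hq
  simp_rw [ProbabilityTheory.lintegral_betaPDF, mul_assoc,
    ENNReal.ofReal_mul (one_div_pos.2 hβ).le] at hpdf
  rw [lintegral_const_mul' _ _ ENNReal.ofReal_ne_top, one_div, ENNReal.ofReal_inv_of_pos hβ,
    mul_comm, ← div_eq_mul_inv, ENNReal.div_eq_one_iff (by simpa using hβ) (by simp)] at hpdf
  exact hpdf

lemma lintegral_rpow_mul_sub_rpow_Ioo {p q w : ℝ} (hp : 0 < p) (hq : 0 < q) (hw : 0 < w) :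
    ∫⁻ u in Set.Ioo 0 w, ENNReal.ofReal (u ^ (p - 1) * (w - u) ^ (q - 1))
      = ENNReal.ofReal (w ^ (p + q - 1) * ProbabilityTheory.beta p q) := by
  have himage : (w * ·) '' Set.Ioo (0 : ℝ) 1 = Set.Ioo 0 w := by
    simp [Set.image_mul_left_Ioo hw]
  rw [← himage, lintegral_image_eq_lintegral_abs_deriv_mul measurableSet_Ioo
    (fun u _ => (hasDerivAt_const_mul w).hasDerivWithinAt)
    (mul_right_injective₀ hw.ne').injOn, ENNReal.ofReal_mul (by positivity),
    ← lintegral_rpow_mul_one_sub_rpow_Ioo hp hq, ← lintegral_const_mul' _ _ ENNReal.ofReal_ne_top]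
  refine setLIntegral_congr_fun measurableSet_Ioo fun u ⟨hu₀, hu₁⟩ => ?_
  have hu₁' : 0 < 1 - u := sub_pos.2 hu₁
  simp only [abs_of_pos hw]
  rw [← ENNReal.ofReal_mul hw.le, ← ENNReal.ofReal_mul (by positivity),
    show w - w * u = w * (1 - u) by ring, Real.mul_rpow hw.le hu₀.le,
    Real.mul_rpow hw.le hu₁'.le, show p + q - 1 = 1 + (p - 1) + (q - 1) by ring,
    Real.rpow_add hw, Real.rpow_add hw, Real.rpow_one]
  ring_nf

end GammaBeta

section EvenIntegrals

lemma lintegral_eq_two_mul_lintegral_Ioi_of_even {f : ℝ → ENNReal} (hf : ∀ z, f (-z) = f z) :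
    ∫⁻ z, f z = 2 * ∫⁻ z in Set.Ioi 0, f z := by
  have hneg : ∫⁻ z in Set.Iio 0, f z = ∫⁻ z in Set.Ioi 0, f z := by
    rw [← lintegral_indicator measurableSet_Iio, ← lintegral_neg_eq_self,
      ← lintegral_indicator measurableSet_Ioi]
    simp only [Set.indicator, Set.mem_Iio, Set.mem_Ioi, neg_lt_zero, hf]
  rw [← lintegral_add_compl f (measurableSet_Ioi (a := (0 : ℝ))), Set.compl_Ioi,
    setLIntegral_congr Iio_ae_eq_Iic.symm, hneg, two_mul]

lemma lintegral_comp_sq (f : ℝ → ENNReal) :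
    ∫⁻ z : ℝ, f (z ^ 2) = ∫⁻ u in Set.Ioi 0, ENNReal.ofReal (√u)⁻¹ * f u := by
  have himage : (√·) '' Set.Ioi (0 : ℝ) = Set.Ioi 0 := by
    ext z
    exact ⟨fun ⟨u, hu, huz⟩ => huz ▸ Real.sqrt_pos.2 hu,
      fun hz => ⟨z ^ 2, Set.mem_Ioi.2 (pow_pos hz 2), Real.sqrt_sq (le_of_lt hz)⟩⟩
  rw [lintegral_eq_two_mul_lintegral_Ioi_of_even (fun z => by rw [neg_sq]), ← himage,
    lintegral_image_eq_lintegral_abs_deriv_mul measurableSet_Ioi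
      (fun u hu => (Real.hasDerivAt_sqrt (ne_of_gt hu)).hasDerivWithinAt)
      (fun u hu v hv => (Real.sqrt_inj (le_of_lt hu) (le_of_lt hv)).1), himage,
    ← lintegral_const_mul' _ _ ENNReal.ofNat_ne_top]
  refine setLIntegral_congr_fun measurableSet_Ioi fun u (hu : 0 < u) => ?_
  rw [Real.sq_sqrt hu.le, ← mul_assoc, ← ENNReal.ofReal_ofNat 2,
    ← ENNReal.ofReal_mul zero_le_two, abs_of_pos (by positivity)]
  congr 2
  field_simp

variable {μ : Measure ℝ} [μ.IsNegInvariant] {g : ℝ → ENNReal}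

lemma lintegral_even_mul_exp_neg_eq_mul_cosh (hg : Measurable g) (hg_even : ∀ z, g (-z) = g z)
    (u : ℝ) :
    ∫⁻ z, g z * ENNReal.ofReal (Real.exp (-(u * z))) ∂μ
      = ∫⁻ z, g z * ENNReal.ofReal (Real.cosh (u * z)) ∂μ := by
  refine (ENNReal.mul_right_inj two_ne_zero ENNReal.ofNat_ne_top).1 ?_
  calc 2 * ∫⁻ z, g z * ENNReal.ofReal (Real.exp (-(u * z))) ∂μ
      = ∫⁻ z, g z * ENNReal.ofReal (Real.exp (-(u * z))) ∂μ
        + ∫⁻ z, g z * ENNReal.ofReal (Real.exp (u * z)) ∂μ := by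
        rw [two_mul]
        nth_rw 2 [← lintegral_neg_eq_self]
        simp only [hg_even, mul_neg, neg_neg]
    _ = ∫⁻ z, 2 * (g z * ENNReal.ofReal (Real.cosh (u * z))) ∂μ := by
        rw [← lintegral_add_left (by fun_prop)]
        refine lintegral_congr fun z => ?_
        rw [← mul_add, ← ENNReal.ofReal_add (by positivity) (by positivity), mul_left_comm,
          ← ENNReal.ofReal_ofNat 2, ← ENNReal.ofReal_mul zero_le_two, Real.cosh_eq]
        ring_nf
    _ = _ := lintegral_const_mul' _ _ ENNReal.ofNat_ne_top

lemma lintegral_even_mul_exp_neg (hg : Measurable g) (hg_even : ∀ z, g (-z) = g z) (u : ℝ) :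
    ∫⁻ z, g z * ENNReal.ofReal (Real.exp (-(u * z))) ∂μ
      = ∑' k : ℕ, ENNReal.ofReal (u ^ (2 * k) / ((2 * k).factorial : ℝ))
          * ∫⁻ z, g z * ENNReal.ofReal (z ^ (2 * k)) ∂μ := by
  have hcosh (z : ℝ) : ENNReal.ofReal (Real.cosh (u * z)) =
      ∑' k : ℕ, ENNReal.ofReal (u ^ (2 * k) / ((2 * k).factorial : ℝ))
        * ENNReal.ofReal (z ^ (2 * k)) := by
    have hsum := Real.hasSum_cosh (u * z)
    simp only [mul_pow, mul_div_right_comm (u ^ _)] at hsum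
    have hu (k : ℕ) : 0 ≤ u ^ (2 * k) / ((2 * k).factorial : ℝ) := by
      have := (even_two_mul k).pow_nonneg u
      positivity
    rw [← hsum.tsum_eq, ENNReal.ofReal_tsum_of_nonneg
      (fun k => mul_nonneg (hu k) ((even_two_mul k).pow_nonneg z)) hsum.summable]
    simp only [ENNReal.ofReal_mul (hu _)]
  simp only [lintegral_even_mul_exp_neg_eq_mul_cosh hg hg_even, hcosh, ← ENNReal.tsum_mul_left]
  rw [lintegral_tsum fun k => by fun_prop]
  refine tsum_congr fun k => ?_
  rw [← lintegral_const_mul' _ _ ENNReal.ofReal_ne_top]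
  simp only [mul_left_comm]

end EvenIntegrals

section Fibre

variable {q w : ℝ}

lemma measurableSet_sub_sq_pos (w : ℝ) : MeasurableSet {z : ℝ | 0 < w - z ^ 2} :=
  measurableSet_lt measurable_const (by fun_prop)

lemma lintegral_sub_sq_rpow_mul_pow (hq : 0 < q) (hw : 0 < w) (k : ℕ) :
    ∫⁻ z in {z : ℝ | 0 < w - z ^ 2}, ENNReal.ofReal ((w - z ^ 2) ^ (q - 1) * z ^ (2 * k))
      = ENNReal.ofReal (w ^ (q + k - 1 / 2) * ProbabilityTheory.beta (k + 1 / 2) q) := by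
  let f : ℝ → ENNReal :=
    {u : ℝ | 0 < w - u}.indicator fun u => ENNReal.ofReal ((w - u) ^ (q - 1) * u ^ k)
  have hmeas : MeasurableSet {u : ℝ | 0 < w - u} := measurableSet_lt measurable_const (by fun_prop)
  have hset : Set.Ioi 0 ∩ {u : ℝ | 0 < w - u} = Set.Ioo 0 w := by
    ext u
    simp
  calc _ = ∫⁻ z : ℝ, f (z ^ 2) := by
        rw [← lintegral_indicator (measurableSet_sub_sq_pos w)]
        simp only [f, Set.indicator, Set.mem_ofPred_eq, pow_mul]
    _ = ∫⁻ u in Set.Ioi 0, {u : ℝ | 0 < w - u}.indicator (fun u =>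
          ENNReal.ofReal (√u)⁻¹ * ENNReal.ofReal ((w - u) ^ (q - 1) * u ^ k)) u := by
        rw [lintegral_comp_sq]
        simp only [f, Set.indicator_apply, mul_ite, mul_zero]
    _ = ∫⁻ u in Set.Ioo 0 w,
          ENNReal.ofReal (u ^ ((k + 1 / 2 : ℝ) - 1) * (w - u) ^ (q - 1)) := by
        rw [setLIntegral_indicator hmeas, Set.inter_comm, hset]
        refine setLIntegral_congr_fun measurableSet_Ioo fun u ⟨hu, _⟩ => ?_
        rw [← ENNReal.ofReal_mul (by positivity), Real.sqrt_eq_rpow, ← Real.rpow_neg hu.le,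
          show (k + 1 / 2 - 1 : ℝ) = -(1 / 2) + k by ring, Real.rpow_add hu, Real.rpow_natCast]
        ring_nf
    _ = _ := by
        rw [lintegral_rpow_mul_sub_rpow_Ioo (by positivity) hq hw]
        ring_nf

lemma lintegral_sub_sq_rpow_mul_exp_neg (hq : 0 < q) (hw : 0 < w) (u : ℝ) :
    ∫⁻ z in {z : ℝ | 0 < w - z ^ 2},
        ENNReal.ofReal ((w - z ^ 2) ^ (q - 1) * Real.exp (-(u * z)))
      = ∑' k : ℕ, ENNReal.ofReal (u ^ (2 * k) / ((2 * k).factorial : ℝ))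
          * ENNReal.ofReal (w ^ (q + k - 1 / 2) * ProbabilityTheory.beta (k + 1 / 2) q) := by
  let g : ℝ → ENNReal :=
    {z : ℝ | 0 < w - z ^ 2}.indicator fun z => ENNReal.ofReal ((w - z ^ 2) ^ (q - 1))
  have hmeas := measurableSet_sub_sq_pos w
  have hg : Measurable g := Measurable.indicator (by fun_prop) hmeas
  have hg_even (z : ℝ) : g (-z) = g z := by
    simp only [g, Set.indicator, Set.mem_ofPred_eq, neg_sq]
  have hlintegral (h : ℝ → ℝ) : ∫⁻ z, g z * ENNReal.ofReal (h z)
      = ∫⁻ z in {z : ℝ | 0 < w - z ^ 2}, ENNReal.ofReal ((w - z ^ 2) ^ (q - 1) * h z) := by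
    rw [← lintegral_indicator hmeas]
    refine lintegral_congr fun z => ?_
    by_cases hz : z ∈ {z : ℝ | 0 < w - z ^ 2}
    · simp only [g, Set.indicator_of_mem hz,
        ENNReal.ofReal_mul (Real.rpow_nonneg (le_of_lt hz) (q - 1))]
    · simp only [g, Set.indicator_of_notMem hz, zero_mul]
  rw [← hlintegral, lintegral_even_mul_exp_neg hg hg_even]
  simp only [hlintegral, lintegral_sub_sq_rpow_mul_pow hq hw]

end Fibre

section MomentIntegral

/-- The cone of positive definite matrices `[[x, z], [z, y]]`, in the coordinates `(x, y, z)`. -/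
def posDefCone : Set (ℝ × ℝ × ℝ) :=
  {p | 0 < p.1 ∧ 0 < p.2.1 ∧ 0 < p.1 * p.2.1 - p.2.2 ^ 2}

lemma measurableSet_posDefCone : MeasurableSet posDefCone := by
  have hx : MeasurableSet {p : ℝ × ℝ × ℝ | 0 < p.1} := measurableSet_lt (by fun_prop) (by fun_prop)
  have hy : MeasurableSet {p : ℝ × ℝ × ℝ | 0 < p.2.1} :=
    measurableSet_lt (by fun_prop) (by fun_prop)
  have hdet : MeasurableSet {p : ℝ × ℝ × ℝ | 0 < p.1 * p.2.1 - p.2.2 ^ 2} :=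
    measurableSet_lt (by fun_prop) (by fun_prop)
  exact hx.inter (hy.inter hdet)

lemma lintegral_posDefCone {f : ℝ × ℝ × ℝ → ENNReal} (hf : Measurable f) :
    ∫⁻ p in posDefCone, f p = ∫⁻ x in Set.Ioi 0, ∫⁻ y in Set.Ioi 0,
      ∫⁻ z in {z : ℝ | 0 < x * y - z ^ 2}, f (x, y, z) := by
  have hF : Measurable (posDefCone.indicator f) := hf.indicator measurableSet_posDefCone
  rw [← lintegral_indicator measurableSet_posDefCone, Measure.volume_eq_prod,
    lintegral_prod _ hF.aemeasurable, ← lintegral_indicator measurableSet_Ioi]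
  refine lintegral_congr fun x => ?_
  have hFx : Measurable fun p : ℝ × ℝ => posDefCone.indicator f (x, p) :=
    hF.comp measurable_prodMk_left
  rw [Measure.volume_eq_prod, lintegral_prod _ hFx.aemeasurable]
  by_cases hx : 0 < x
  · rw [Set.indicator_of_mem (Set.mem_Ioi.2 hx), ← lintegral_indicator measurableSet_Ioi]
    refine lintegral_congr fun y => ?_
    by_cases hy : 0 < y
    · rw [Set.indicator_of_mem (Set.mem_Ioi.2 hy),
        ← lintegral_indicator (measurableSet_sub_sq_pos _)]
      simp only [Set.indicator, posDefCone, Set.mem_ofPred_eq, hx, hy, true_and]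
    · simp [Set.indicator, posDefCone, hy]
  · simp [Set.indicator, posDefCone, hx]

lemma lintegral_lintegral_tsum_mul {X Y ι : Type*} [MeasurableSpace X] [MeasurableSpace Y]
    [Countable ι] {μ : Measure X} {ν : Measure Y} {f : ι → X → ENNReal} {g : ι → Y → ENNReal}
    (hf : ∀ i, Measurable (f i)) (hg : ∀ i, Measurable (g i)) :
    ∫⁻ x, ∫⁻ y, ∑' i, f i x * g i y ∂ν ∂μ = ∑' i, (∫⁻ x, f i x ∂μ) * ∫⁻ y, g i y ∂ν := by
  calc _ = ∫⁻ x, ∑' i, f i x * ∫⁻ y, g i y ∂ν ∂μ := by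
        refine lintegral_congr fun x => ?_
        rw [lintegral_tsum fun i => by fun_prop]
        exact tsum_congr fun i => lintegral_const_mul _ (hg i)
    _ = _ := by
        rw [lintegral_tsum fun i => by fun_prop]
        exact tsum_congr fun i => lintegral_mul_const _ (hf i)

lemma lintegral_wishart_fibre {q x y : ℝ} (hq : 0 < q) (hx : 0 < x) (hy : 0 < y)
    (a b c s t : ℝ) :
    ∫⁻ z in {z : ℝ | 0 < x * y - z ^ 2}, ENNReal.ofReal (x ^ s * y ^ t *
        (x * y - z ^ 2) ^ (q - 1) * Real.exp (-(a * x + b * y + 2 * c * z)))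
      = ∑' k : ℕ, ENNReal.ofReal ((2 * c) ^ (2 * k) / ((2 * k).factorial : ℝ)
          * ProbabilityTheory.beta (k + 1 / 2) q
          * (x ^ ((q + 1 / 2 + s + k) - 1) * Real.exp (-(a * x))))
          * ENNReal.ofReal (y ^ ((q + 1 / 2 + t + k) - 1) * Real.exp (-(b * y))) := by
  have hfactor (z : ℝ) : ENNReal.ofReal (x ^ s * y ^ t * (x * y - z ^ 2) ^ (q - 1)
        * Real.exp (-(a * x + b * y + 2 * c * z)))
      = ENNReal.ofReal (x ^ s * Real.exp (-(a * x)) * (y ^ t * Real.exp (-(b * y))))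
        * ENNReal.ofReal ((x * y - z ^ 2) ^ (q - 1) * Real.exp (-(2 * c * z))) := by
    rw [← ENNReal.ofReal_mul (by positivity), neg_add, neg_add, Real.exp_add, Real.exp_add]
    ring_nf
  simp only [hfactor]
  rw [lintegral_const_mul' _ _ ENNReal.ofReal_ne_top,
    lintegral_sub_sq_rpow_mul_exp_neg hq (mul_pos hx hy), ← ENNReal.tsum_mul_left]
  refine tsum_congr fun k => ?_
  have hβ := ProbabilityTheory.beta_pos (by positivity : 0 < (k + 1 / 2 : ℝ)) hq
  have hc := (even_two_mul k).pow_nonneg (2 * c)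
  rw [← ENNReal.ofReal_mul (by positivity), ← ENNReal.ofReal_mul (by positivity),
    ← ENNReal.ofReal_mul (by positivity), Real.mul_rpow hx.le hy.le,
    show q + 1 / 2 + s + k - 1 = s + (q + k - 1 / 2) by ring,
    show q + 1 / 2 + t + k - 1 = t + (q + k - 1 / 2) by ring, Real.rpow_add hx, Real.rpow_add hy]
  ring_nf

lemma lintegral_wishart {q a b s t : ℝ} (hq : 0 < q) (ha : 0 < a) (hb : 0 < b)
    (hs : 0 < q + 1 / 2 + s) (ht : 0 < q + 1 / 2 + t) (c : ℝ) :
    ∫⁻ p in posDefCone, ENNReal.ofReal (p.1 ^ s * p.2.1 ^ t *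
        (p.1 * p.2.1 - p.2.2 ^ 2) ^ (q - 1) *
        Real.exp (-(a * p.1 + b * p.2.1 + 2 * c * p.2.2)))
      = ∑' k : ℕ, ENNReal.ofReal ((2 * c) ^ (2 * k) / ((2 * k).factorial : ℝ)
          * ProbabilityTheory.beta (k + 1 / 2) q
          * ((1 / a) ^ (q + 1 / 2 + s + k) * Real.Gamma (q + 1 / 2 + s + k))
          * ((1 / b) ^ (q + 1 / 2 + t + k) * Real.Gamma (q + 1 / 2 + t + k))) := by
  rw [lintegral_posDefCone (by fun_prop), setLIntegral_congr_fun measurableSet_Ioi fun x hx =>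
    setLIntegral_congr_fun measurableSet_Ioi fun y hy =>
      lintegral_wishart_fibre hq hx hy a b c s t, lintegral_lintegral_tsum_mul]
  rotate_left
  · fun_prop
  · fun_prop
  refine tsum_congr fun k => ?_
  have hβ := ProbabilityTheory.beta_pos (by positivity : 0 < (k + 1 / 2 : ℝ)) hq
  have hcoeff : 0 ≤ (2 * c) ^ (2 * k) / ((2 * k).factorial : ℝ)
      * ProbabilityTheory.beta (k + 1 / 2) q := by
    have := (even_two_mul k).pow_nonneg (2 * c)
    positivity
  simp only [ENNReal.ofReal_mul hcoeff]
  rw [lintegral_const_mul' _ _ ENNReal.ofReal_ne_top,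
    lintegral_rpow_mul_exp_neg_mul_Ioi (by positivity) ha,
    lintegral_rpow_mul_exp_neg_mul_Ioi (by positivity) hb, ← ENNReal.ofReal_mul hcoeff,
    ← ENNReal.ofReal_mul (by positivity)]

lemma wishart_coefficient_eq {q a b s t : ℝ} (hq : 0 < q) (ha : 0 < a) (hb : 0 < b)
    (hs : 0 < q + 1 / 2 + s) (ht : 0 < q + 1 / 2 + t) (c : ℝ) (k : ℕ) :
    (2 * c) ^ (2 * k) / ((2 * k).factorial : ℝ) * ProbabilityTheory.beta (k + 1 / 2) q
        * ((1 / a) ^ (q + 1 / 2 + s + k) * Real.Gamma (q + 1 / 2 + s + k))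
        * ((1 / b) ^ (q + 1 / 2 + t + k) * Real.Gamma (q + 1 / 2 + t + k))
      = √π * Real.Gamma q / Real.Gamma (q + 1 / 2)
        * ((1 / a) ^ (q + 1 / 2 + s) * Real.Gamma (q + 1 / 2 + s))
        * ((1 / b) ^ (q + 1 / 2 + t) * Real.Gamma (q + 1 / 2 + t))
        * (ordinaryHypergeometricCoefficient (q + 1 / 2 + s) (q + 1 / 2 + t) (q + 1 / 2) k
          * (c ^ 2 / (a * b)) ^ k) := by
  rw [two_mul_pow_div_factorial_mul_beta hq, Gamma_add_natCast hs, Gamma_add_natCast ht,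
    Real.rpow_add (one_div_pos.2 ha), Real.rpow_add (one_div_pos.2 hb), Real.rpow_natCast,
    Real.rpow_natCast, ordinaryHypergeometricCoefficient, pow_mul, div_pow, div_pow, div_pow,
    mul_pow, one_pow]
  field_simp

variable {α a b c s t : ℝ}

lemma abs_sq_div_mul_lt_one (hdet : 0 < a * b - c ^ 2) : |c ^ 2 / (a * b)| < 1 := by
  have hab : 0 < a * b := by linarith [sq_nonneg c]
  rw [abs_of_nonneg (by positivity), div_lt_one hab]
  linarith

lemma wishartMomentIntegral_eq (hα : 1 < α) (ha : 0 < a) (hdet : 0 < a * b - c ^ 2)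
    (hs : 0 < α / 2 + s) (ht : 0 < α / 2 + t) :
    wishartMomentIntegral α a b c s t = √π * Real.Gamma ((α - 1) / 2) / Real.Gamma (α / 2)
      * ((1 / a) ^ (α / 2 + s) * Real.Gamma (α / 2 + s))
      * ((1 / b) ^ (α / 2 + t) * Real.Gamma (α / 2 + t))
      * ₂F₁ (α / 2 + s) (α / 2 + t) (α / 2) (c ^ 2 / (a * b)) := by
  have hb : 0 < b := pos_of_mul_pos_right (by linarith [sq_nonneg c]) ha.le
  obtain ⟨q, rfl⟩ : ∃ q, α = 2 * q + 1 := ⟨(α - 1) / 2, by ring⟩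
  have hq : 0 < q := by linarith
  rw [show (2 * q + 1) / 2 = q + 1 / 2 by ring] at hs ht ⊢
  rw [show (2 * q + 1 - 1) / 2 = q by ring]
  have hsum := (hasSum_ordinaryHypergeometric (q + 1 / 2 + s) (q + 1 / 2 + t) (q + 1 / 2)
    (abs_sq_div_mul_lt_one hdet)).mul_left (√π * Real.Gamma q / Real.Gamma (q + 1 / 2)
      * ((1 / a) ^ (q + 1 / 2 + s) * Real.Gamma (q + 1 / 2 + s))
      * ((1 / b) ^ (q + 1 / 2 + t) * Real.Gamma (q + 1 / 2 + t)))
  simp only [← wishart_coefficient_eq hq ha hb hs ht] at hsum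
  have hnonneg (k : ℕ) : 0 ≤ (2 * c) ^ (2 * k) / ((2 * k).factorial : ℝ)
      * ProbabilityTheory.beta (k + 1 / 2) q
      * ((1 / a) ^ (q + 1 / 2 + s + k) * Real.Gamma (q + 1 / 2 + s + k))
      * ((1 / b) ^ (q + 1 / 2 + t + k) * Real.Gamma (q + 1 / 2 + t + k)) := by
    have hβ := ProbabilityTheory.beta_pos (by positivity : 0 < (k + 1 / 2 : ℝ)) hq
    have hc := (even_two_mul k).pow_nonneg (2 * c)
    positivity
  rw [wishartMomentIntegral, ← posDefCone, show (2 * q + 1 - 3) / 2 = q - 1 by ring,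
    integral_eq_lintegral_of_nonneg_ae]
  · rw [lintegral_wishart hq ha hb hs ht c,
      ← ENNReal.ofReal_tsum_of_nonneg hnonneg hsum.summable, hsum.tsum_eq,
      ENNReal.toReal_ofReal (hsum.nonneg hnonneg)]
  · filter_upwards [ae_restrict_mem measurableSet_posDefCone] with p ⟨hx, hy, hz⟩
    simp only [Pi.zero_apply]
    positivity
  · exact Measurable.aestronglyMeasurable (by fun_prop)

lemma wishartMomentIntegral_nonneg (α a b c s t : ℝ) : 0 ≤ wishartMomentIntegral α a b c s t :=
  setIntegral_nonneg measurableSet_posDefCone fun p ⟨hx, hy, hz⟩ => by positivity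

lemma wishartMomentIntegral_mul_zero_zero (hα : 1 < α) (ha : 0 < a) (hdet : 0 < a * b - c ^ 2)
    (hs : 0 < α / 2 + s) (ht : 0 < α / 2 + t) :
    wishartMomentIntegral α a b c s t * wishartMomentIntegral α a b c 0 0
      = wishartMomentIntegral α a b c s 0 * wishartMomentIntegral α a b c 0 t
        * ((1 - c ^ 2 / (a * b)) ^ (α / 2 + s + t)
          * ₂F₁ (α / 2 + s) (α / 2 + t) (α / 2) (c ^ 2 / (a * b))) := by
  have hβ' (k : ℕ) : (k : ℝ) ≠ -(α / 2) := by linarith [k.cast_nonneg (α := ℝ)]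
  have hr := abs_sq_div_mul_lt_one hdet
  have hr' : 0 < 1 - c ^ 2 / (a * b) := sub_pos.2 (lt_of_abs_lt hr)
  have hβ₀ : 0 < α / 2 + 0 := by linarith
  simp only [wishartMomentIntegral_eq hα ha hdet, hs, ht, hβ₀]
  rw [add_zero, ordinaryHypergeometric_symm (α / 2) (α / 2 + t),
    ordinaryHypergeometric_right_cancel _ hβ' hr, ordinaryHypergeometric_right_cancel _ hβ' hr,
    ordinaryHypergeometric_right_cancel _ hβ' hr]
  have hexp : (1 - c ^ 2 / (a * b)) ^ (-(α / 2)) = (1 - c ^ 2 / (a * b)) ^ (-(α / 2 + s))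
      * (1 - c ^ 2 / (a * b)) ^ (-(α / 2 + t)) * (1 - c ^ 2 / (a * b)) ^ (α / 2 + s + t) := by
    rw [← Real.rpow_add hr', ← Real.rpow_add hr']
    ring_nf
  rw [hexp]
  ring

end MomentIntegral

theorem wishart_GPI_2x2_general {α a b c ν₁ ν₂ : ℝ} (hα : 1 < α) (ha : 0 < a)
    (hdet : 0 < a * b - c ^ 2) (hν : 0 ≤ ν₁ * ν₂) (hsum : 0 < α / 2 + ν₁ + ν₂) :
    wishartMomentIntegral α a b c ν₁ ν₂ * wishartMomentIntegral α a b c 0 0 ≥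
        wishartMomentIntegral α a b c ν₁ 0 * wishartMomentIntegral α a b c 0 ν₂ *
          (1 + (1 - c ^ 2 / (a * b)) ^ (α / 2 + ν₁ + ν₂) *
            (confluentHypergeometricLimit (α / 2) (ν₁ * ν₂ * (c ^ 2 / (a * b))) - 1)) ∧
      wishartMomentIntegral α a b c ν₁ 0 * wishartMomentIntegral α a b c 0 ν₂ *
          (1 + (1 - c ^ 2 / (a * b)) ^ (α / 2 + ν₁ + ν₂) *
            (confluentHypergeometricLimit (α / 2) (ν₁ * ν₂ * (c ^ 2 / (a * b))) - 1)) ≥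
        wishartMomentIntegral α a b c ν₁ 0 * wishartMomentIntegral α a b c 0 ν₂ := by
  have hβ : 0 < α / 2 := by linarith
  obtain ⟨hν₁, hν₂⟩ : 0 < α / 2 + ν₁ ∧ 0 < α / 2 + ν₂ := by
    rcases mul_nonneg_iff.1 hν with ⟨h₁, h₂⟩ | ⟨h₁, h₂⟩ <;> constructor <;> linarith
  have hab : 0 < a * b := by linarith [sq_nonneg c]
  have hr₀ : 0 ≤ c ^ 2 / (a * b) := by positivity
  have hr₁ : c ^ 2 / (a * b) < 1 := lt_of_abs_lt (abs_sq_div_mul_lt_one hdet)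
  have hI : 0 ≤ wishartMomentIntegral α a b c ν₁ 0 * wishartMomentIntegral α a b c 0 ν₂ :=
    mul_nonneg (wishartMomentIntegral_nonneg ..) (wishartMomentIntegral_nonneg ..)
  constructor
  · rw [wishartMomentIntegral_mul_zero_zero hα ha hdet hν₁ hν₂]
    exact mul_le_mul_of_nonneg_left
      (one_add_mul_confluentHypergeometricLimit_le hβ hν hsum hr₀ hr₁) hI
  · have hgain := one_le_confluentHypergeometricLimit hβ (mul_nonneg hν hr₀)
    exact le_mul_of_one_le_right hI <| le_add_of_nonneg_right <|
      mul_nonneg (Real.rpow_nonneg (sub_nonneg.2 hr₁.le) _) (sub_nonneg.2 hgain)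

/-- Quantitative Gaussian-product-type inequality for the bivariate Wishart
distribution: with `ρ² = c²/(ab)`,
`I(ν₁,ν₂) I(0,0) ≥ I(ν₁,0) I(0,ν₂) [1 + (1−ρ²)^{α/2+ν₁+ν₂} (₀F₁(α/2; ν₁ν₂ρ²) − 1)]`
`≥ I(ν₁,0) I(0,ν₂)`. -/
theorem wishart_GPI_2x2 (α a b c ν₁ ν₂ : ℝ)
    (hα : 1 < α) (ha : 0 < a) (hdet : 0 < a * b - c ^ 2)
    (hν₁ : 0 ≤ ν₁) (hν₂ : 0 ≤ ν₂) :
    wishartMomentIntegral α a b c ν₁ ν₂ * wishartMomentIntegral α a b c 0 0 ≥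
        wishartMomentIntegral α a b c ν₁ 0 * wishartMomentIntegral α a b c 0 ν₂ *
          (1 + (1 - c ^ 2 / (a * b)) ^ (α / 2 + ν₁ + ν₂) *
            ((∑' k : ℕ, (ν₁ * ν₂) ^ k * (c ^ 2 / (a * b)) ^ k /
                ((ascPochhammer ℝ k).eval (α / 2) * (k.factorial : ℝ))) - 1)) ∧
      wishartMomentIntegral α a b c ν₁ 0 * wishartMomentIntegral α a b c 0 ν₂ *
          (1 + (1 - c ^ 2 / (a * b)) ^ (α / 2 + ν₁ + ν₂) *
            ((∑' k : ℕ, (ν₁ * ν₂) ^ k * (c ^ 2 / (a * b)) ^ k /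
                ((ascPochhammer ℝ k).eval (α / 2) * (k.factorial : ℝ))) - 1)) ≥
        wishartMomentIntegral α a b c ν₁ 0 * wishartMomentIntegral α a b c 0 ν₂ := by
  simpa only [confluentHypergeometricLimit, mul_pow] using
    wishart_GPI_2x2_general hα ha hdet (mul_nonneg hν₁ hν₂) (by linarith)
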